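/- A symplectic connection ∇ on a symplectic manifold (M, Ω) has constant symplectic sectional curvature if and only if it is Weyl flat with parallel Ricci tensor, in which case it is locally symmetric (∇R = 0). -/

import Mathlib

/- Chart model of a symplectic manifold: the manifold is modeled by (a global affine chart of)
a finite-dimensional real normed vector space `E`; a symplectic form is a smooth field of
nondegenerate antisymmetric bilinear forms (closedness is automatic in the presence of a
compatible torsion-free connection), and a symplectic connection is recorded by its
(torsion-free) Christoffel symbols, preserving the symplectic form. -/

structure SympForm (E : Type*) [NormedAddCommGroup E] [NormedSpace ℝ E] where
  ω : E → E →L[ℝ] E →L[ℝ] ℝ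
  smooth : ContDiff ℝ (⊤ : ℕ∞) ω
  skew : ∀ x u v, ω x u v = - ω x v u
  nondeg : ∀ x u, (∀ v, ω x u v = 0) → u = 0

structure SympConnection {E : Type*} [NormedAddCommGroup E] [NormedSpace ℝ E]
    (Ω : SympForm E) where
  Γ : E → E →L[ℝ] E →L[ℝ] E
  smooth : ContDiff ℝ (⊤ : ℕ∞) Γ
  symm : ∀ x u v, Γ x u v = Γ x v u
  parallel : ∀ x u v w, fderiv ℝ Ω.ω x u v w = Ω.ω x (Γ x u v) w + Ω.ω x v (Γ x u w)

variable {E : Type*} [NormedAddCommGroup E] [NormedSpace ℝ E]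

/-- Curvature `R(u,v)w = ∇_u∇_v w - ∇_v∇_u w - ∇_{[u,v]}w` of a symplectic connection,
evaluated on constant vector fields of the chart, as an operator in `w`. -/
noncomputable def curvOp {Ω : SympForm E} (C : SympConnection Ω) (x u v : E) : E →L[ℝ] E :=
  fderiv ℝ C.Γ x u v - fderiv ℝ C.Γ x v u
    + (C.Γ x u).comp (C.Γ x v) - (C.Γ x v).comp (C.Γ x u)

/-- Lowered curvature `R_{ijkl} = R_{ijk}{}^p Ω_{pl}`, i.e. `Ω(R(u,v)w, z)`. -/
noncomputable def Rlow {Ω : SympForm E} (C : SympConnection Ω) (x u v w z : E) : ℝ :=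
  Ω.ω x (curvOp C x u v w) z

/-- The symplectic curvature quadratic form `scurv_{x,L}(Z)` of the plane `L` spanned by `X, Y`. -/
noncomputable def scurv {Ω : SympForm E} (C : SympConnection Ω) (x X Y Z : E) : ℝ :=
  Rlow C x X Y Z Z / Ω.ω x X Y

/-- Ricci tensor `R_{ij} = R_{pij}{}^p`: the trace of `w ↦ R(w,u)v`. -/
noncomputable def ricci {Ω : SympForm E} (C : SympConnection Ω) (x u v : E) : ℝ :=
  LinearMap.trace ℝ E
    ((((fderiv ℝ C.Γ x).flip u).flip v - ((fderiv ℝ C.Γ x) u).flip v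
      + (C.Γ x).flip (C.Γ x u v) - (C.Γ x u).comp ((C.Γ x).flip v)).toLinearMap)

/-- Covariant derivative `(∇_w Ric)(u,v)` of the Ricci tensor. -/
noncomputable def covDerivRic {Ω : SympForm E} (C : SympConnection Ω) (x w u v : E) : ℝ :=
  fderiv ℝ (fun y => ricci C y u v) x w - ricci C x (C.Γ x w u) v - ricci C x u (C.Γ x w v)

/-- Covariant derivative `(∇_a R)(u,v,w,z)` of the (lowered) curvature tensor. -/
noncomputable def covDerivR {Ω : SympForm E} (C : SympConnection Ω) (x a u v w z : E) : ℝ :=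
  fderiv ℝ (fun y => Rlow C y u v w z) x a
    - Rlow C x (C.Γ x a u) v w z - Rlow C x u (C.Γ x a v) w z
    - Rlow C x u v (C.Γ x a w) z - Rlow C x u v w (C.Γ x a z)

/-- `∇` is locally symmetric: `∇R = 0`. -/
def LocallySymmetric {Ω : SympForm E} (C : SympConnection Ω) : Prop :=
  ∀ x a u v w z, covDerivR C x a u v w z = 0

/-- The Ricci tensor is parallel. -/
def ParallelRicci {Ω : SympForm E} (C : SympConnection Ω) : Prop :=
  ∀ x w u v, covDerivRic C x w u v = 0

/-- The symplectic Weyl tensor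
`W_{ijkl} = R_{ijkl} − (1/(n+1))(Ω_{i(k}R_{l)j} − Ω_{j(k}R_{l)i} + Ω_{ij}R_{kl})`
on a manifold of dimension `2n`. -/
noncomputable def weyl (n : ℕ) {Ω : SympForm E} (C : SympConnection Ω) (x u v w z : E) : ℝ :=
  Rlow C x u v w z - (1 / ((n : ℝ) + 1)) *
    ((Ω.ω x u w * ricci C x z v + Ω.ω x u z * ricci C x w v) / 2
      - (Ω.ω x v w * ricci C x z u + Ω.ω x v z * ricci C x w u) / 2
      + Ω.ω x u v * ricci C x w z)

/-- `∇` is Weyl flat (of Ricci type): its symplectic Weyl tensor vanishes. -/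
def WeylFlat (n : ℕ) {Ω : SympForm E} (C : SympConnection Ω) : Prop :=
  ∀ x u v w z, weyl n C x u v w z = 0

/-- `∇` is preferred: `∇_{(i}R_{jk)} = 0` (cyclic symmetrization suffices since `Ric` is
symmetric in its last two arguments). -/
def Preferred {Ω : SympForm E} (C : SympConnection Ω) : Prop :=
  ∀ x u v w, covDerivRic C x u v w + covDerivRic C x v w u + covDerivRic C x w u v = 0

/-- Vanishing of the curvature one-form `ρ_i = ∇^p R_{ip}`: the index is raised with `Ω`, and
the `Ω`-contraction is encoded as the trace of any linear packaging `D` of `∇Ric` against `Ω`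
(such a `D` exists and is unique by nondegeneracy of `Ω`). -/
def RhoZero {Ω : SympForm E} (C : SympConnection Ω) : Prop :=
  ∀ x u, ∀ D : E →ₗ[ℝ] E,
    (∀ w v, Ω.ω x (D w) v = covDerivRic C x w u v) → LinearMap.trace ℝ E D = 0

/-- `A` is a parallel symmetric covariant 2-tensor field. -/
def IsParallelSym2 {Ω : SympForm E} (C : SympConnection Ω)
    (A : E → E →L[ℝ] E →L[ℝ] ℝ) : Prop :=
  (∀ x u v, A x u v = A x v u) ∧ Differentiable ℝ A ∧
    ∀ x u v w, fderiv ℝ A x u v w = A x (C.Γ x u v) w + A x v (C.Γ x u w)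

/-- `∇` has constant symplectic sectional curvature: there is a parallel symmetric 2-tensor `A`
such that on every 2-dimensional symplectic subspace (spanned by `X, Y` with `Ω(X,Y) ≠ 0`)
the symplectic curvature quadratic form is the restriction of the quadratic form of `A`. -/
def HasConstScurv {Ω : SympForm E} (C : SympConnection Ω) : Prop :=
  ∃ A : E → E →L[ℝ] E →L[ℝ] ℝ, IsParallelSym2 C A ∧
    ∀ x X Y, Ω.ω x X Y ≠ 0 →
      ∀ Z ∈ Submodule.span ℝ ({X, Y} : Set E), scurv C x X Y Z = A x Z Z

/-- Lie bracket of vector fields on the chart. -/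
noncomputable def lieVF (X Y : E → E) (x : E) : E :=
  fderiv ℝ Y x (X x) - fderiv ℝ X x (Y x)

/-- Covariant derivative `∇_X Y` of vector fields on the chart. -/
noncomputable def covVF {Ω : SympForm E} (C : SympConnection Ω) (X Y : E → E) (x : E) : E :=
  fderiv ℝ Y x (X x) + C.Γ x (X x) (Y x)

/-- Nijenhuis tensor of an endomorphism field, evaluated on constant vector fields. -/
noncomputable def nijTensor (A : E → E → E) (x u v : E) : E :=
  lieVF (fun y => A y u) (fun y => A y v) x
    - A x (lieVF (fun y => A y u) (fun _ => v) x)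
    - A x (lieVF (fun _ => u) (fun y => A y v) x)
    + A x (A x (lieVF (fun _ => u) (fun _ => v) x))

/-- Covariant derivative along a curve `γ` of a field `V` along `γ`. -/
noncomputable def covAlong {Ω : SympForm E} (C : SympConnection Ω) (γ V : ℝ → E) (t : ℝ) : E :=
  deriv V t + C.Γ (γ t) (deriv γ t) (V t)

/-- `(g,J,Ω)` has constant (para-)holomorphic sectional curvature `4c`:
`R_{ijkl} = 2c(Ω_{i(k}g_{l)j} − Ω_{j(k}g_{l)i} + Ω_{ij}g_{kl})`. -/
def ConstHoloSec {Ω : SympForm E} (C : SympConnection Ω) (g : E → E → E → ℝ) (c : ℝ) : Prop :=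
  ∀ x u v w z, Rlow C x u v w z =
    2 * c * ((Ω.ω x u w * g x z v + Ω.ω x u z * g x w v) / 2
      - (Ω.ω x v w * g x z u + Ω.ω x v z * g x w u) / 2
      + Ω.ω x u v * g x w z)

/-- `C` is the Levi-Civita connection of the metric `g`: `C` is torsion free and `∇g = 0`. -/
def IsLeviCivita {Ω : SympForm E} (C : SympConnection Ω) (g : E → E → E → ℝ) : Prop :=
  ∀ x u v w, fderiv ℝ (fun y => g y v w) x u = g x (C.Γ x u v) w + g x v (C.Γ x u w)

/-! A tensor with the symmetries of a symplectic curvature is determined by its values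
`R(X, Y, X, X)`, and by linearity in `Y` it is enough to know them for `Ω(X, Y) ≠ 0`. Hence
`scurv = A` on symplectic planes means exactly that `R` is the Ricci-type tensor built from `Ω` and
`B = A / 2`. Tracing this identity gives `Ric = (n + 1) B`, because `B` with an index raised is an
`Ω`-skew endomorphism and so trace-free; thus the Weyl tensor vanishes and `Ric` is parallel, and
conversely `B = Ric / (n + 1)` recovers `A`. Since `R` is then a polynomial in the parallel tensors
`Ω` and `B`, it is itself parallel. -/

open Module
open LinearMap (BilinForm)

section SymplecticAlgebra

set_option maxSynthPendingDepth 3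

variable {K V : Type*} [Field K] [AddCommGroup V] [Module K V]

theorem linearMap_ext_of_eqOn_ne_zero {N P : Type*} [AddCommGroup N] [Module K N]
    [AddCommGroup P] [Module K P] {f g : V →ₗ[K] N} {h : V →ₗ[K] P} (hh : h ≠ 0)
    (hfg : ∀ y, h y ≠ 0 → f y = g y) : f = g := by
  obtain ⟨y₀, hy₀⟩ := DFunLike.ne_iff.1 hh
  ext y
  by_cases hy : h y = 0
  · have hadd : f (y + y₀) = g (y + y₀) := hfg _ (by simpa [hy] using hy₀)
    simpa [hfg y₀ hy₀] using hadd
  · exact hfg y hy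

theorem trace_eq_zero_of_isSkewAdjoint [NeZero (2 : K)] [FiniteDimensional K V]
    {B : BilinForm K V} (hB : B.Nondegenerate) {f : End K V} (hf : B.IsSkewAdjoint f) :
    LinearMap.trace K V f = 0 := by
  have hconj : (B.toDual hB).conj f = -Dual.transpose f := by
    ext φ v
    obtain ⟨u, rfl⟩ := (B.toDual hB).surjective φ
    simpa [LinearEquiv.conj_apply, BilinForm.toDual_def, Dual.transpose] using hf u v
  have htrace : LinearMap.trace K V f = -LinearMap.trace K V f := by
    calc LinearMap.trace K V f
        = LinearMap.trace K (Dual K V) (-Dual.transpose f) := by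
          rw [← hconj, LinearMap.trace_conj']
      _ = -LinearMap.trace K V f :=
          (map_neg _ _).trans (congrArg _ (LinearMap.trace_transpose' f))
  have : 2 * LinearMap.trace K V f = 0 := by linear_combination htrace
  simpa [NeZero.ne] using this

/-- The algebraic symmetries of the lowered curvature tensor `R_{ijkl}` of a symplectic
connection. -/
structure IsSymplecticCurvature (R : V →ₗ[K] V →ₗ[K] BilinForm K V) : Prop where
  skew : ∀ u v w z, R u v w z = -R v u w z
  symm : ∀ u v w z, R u v w z = R u v z w
  bianchi : ∀ u v w z, R u v w z + R v w u z + R w u v z = 0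

namespace IsSymplecticCurvature

variable {R S : V →ₗ[K] V →ₗ[K] BilinForm K V}

theorem sub (hR : IsSymplecticCurvature R) (hS : IsSymplecticCurvature S) :
    IsSymplecticCurvature (R - S) where
  skew u v w z := by
    simp only [LinearMap.sub_apply]
    linear_combination hR.skew u v w z - hS.skew u v w z
  symm u v w z := by
    simp only [LinearMap.sub_apply]
    linear_combination hR.symm u v w z - hS.symm u v w z
  bianchi u v w z := by
    simp only [LinearMap.sub_apply]
    linear_combination hR.bianchi u v w z - hS.bianchi u v w z

theorem cyclic_eq_zero [NeZero (2 : K)] (hR : IsSymplecticCurvature R)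
    (h : ∀ u v, R u v u u = 0) (a b c y : V) : R a y b c + R b y c a + R c y a b = 0 := by
  have hpol : 2 * (R a y b c + R b y c a + R c y a b) = 0 := by
    have habc := h (a + b + c) y
    have hab := h (a + b) y
    have hbc := h (b + c) y
    have hca := h (c + a) y
    simp only [map_add, LinearMap.add_apply] at habc hab hbc hca
    linear_combination habc - hab - hbc - hca + h a y + h b y + h c y
      + hR.symm a y b c + hR.symm b y c a + hR.symm c y a b
  simpa [NeZero.ne] using hpol

-- With `P(a, b, c; y)` the cyclic sum of `cyclic_eq_zero`, the symmetries of `R` give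
-- `P(u, w, z; v) - P(v, w, z; u) = 4 R(u, v, w, z)`.
theorem eq_zero [NeZero (2 : K)] (hR : IsSymplecticCurvature R) (h : ∀ u v, R u v u u = 0) :
    R = 0 := by
  ext u v w z
  have hfour : (2 * 2) * R u v w z = 0 := by
    linear_combination hR.cyclic_eq_zero h u w z v - hR.cyclic_eq_zero h v w z u
      + hR.bianchi u v w z + hR.bianchi u v z w - hR.skew w v u z - hR.skew z v u w
      + hR.skew v u w z - hR.symm u v z w - hR.symm w u v z + hR.symm w v u z
  simpa [NeZero.ne] using hfour

end IsSymplecticCurvature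

/-- The curvature tensor of Ricci type
`ω_{i(k}B_{l)j} − ω_{j(k}B_{l)i} + ω_{ij}B_{kl}` built from a skew form `ω` and a symmetric form
`B`; a connection is Weyl flat when its curvature has this shape with `B = Ric / (n + 1)`. -/
def ricciTypeCurv (ω B : BilinForm K V) : V →ₗ[K] V →ₗ[K] BilinForm K V :=
  LinearMap.mk₂ K
    (fun u v => LinearMap.mk₂ K
      (fun w z => 2⁻¹ * (ω u w * B z v + ω u z * B w v) - 2⁻¹ * (ω v w * B z u + ω v z * B w u)
        + ω u v * B w z)
      (fun _ _ _ => by simp only [map_add, LinearMap.add_apply]; ring)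
      (fun _ _ _ => by simp only [map_smul, LinearMap.smul_apply, smul_eq_mul]; ring)
      (fun _ _ _ => by simp only [map_add, LinearMap.add_apply]; ring)
      (fun _ _ _ => by simp only [map_smul, LinearMap.smul_apply, smul_eq_mul]; ring))
    (fun _ _ _ => by ext; simp only [map_add, LinearMap.add_apply, LinearMap.mk₂_apply]; ring)
    (fun _ _ _ => by
      ext; simp only [map_smul, LinearMap.smul_apply, LinearMap.mk₂_apply, smul_eq_mul]; ring)
    (fun _ _ _ => by ext; simp only [map_add, LinearMap.add_apply, LinearMap.mk₂_apply]; ring)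
    (fun _ _ _ => by
      ext; simp only [map_smul, LinearMap.smul_apply, LinearMap.mk₂_apply, smul_eq_mul]; ring)

section RicciType

variable {ω B : BilinForm K V} {R : V →ₗ[K] V →ₗ[K] BilinForm K V}

theorem ricciTypeCurv_apply (ω B : BilinForm K V) (u v w z : V) :
    ricciTypeCurv ω B u v w z =
      2⁻¹ * (ω u w * B z v + ω u z * B w v) - 2⁻¹ * (ω v w * B z u + ω v z * B w u)
        + ω u v * B w z :=
  rfl

theorem isSymplecticCurvature_ricciTypeCurv [NeZero (2 : K)] (hω : ω.IsAlt) (hB : B.IsSymm) :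
    IsSymplecticCurvature (ricciTypeCurv ω B) where
  skew u v w z := by
    simp only [ricciTypeCurv_apply, ← hω.neg_eq u v]
    ring
  symm u v w z := by
    simp only [ricciTypeCurv_apply, hB.eq w z]
    ring
  bianchi u v w z := by
    have h2 : (2 : K) ≠ 0 := NeZero.ne 2
    simp only [ricciTypeCurv_apply, ← hω.neg_eq u v, ← hω.neg_eq u w, ← hω.neg_eq v w,
      hB.eq u v, hB.eq u w, hB.eq v w, hB.eq u z, hB.eq v z, hB.eq w z]
    field_simp
    ring

theorem ricciTypeCurv_self_of_mem_span [NeZero (2 : K)] (hω : ω.IsAlt) (hB : B.IsSymm)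
    {X Y Z : V} (hZ : Z ∈ Submodule.span K {X, Y}) :
    ricciTypeCurv ω B X Y Z Z = 2 * (ω X Y * B Z Z) := by
  have h2 : (2 : K) ≠ 0 := NeZero.ne 2
  obtain ⟨a, b, rfl⟩ := Submodule.mem_span_pair.1 hZ
  simp only [ricciTypeCurv_apply, map_add, map_smul, LinearMap.add_apply, LinearMap.smul_apply,
    smul_eq_mul, hω.self_eq_zero, hB.eq Y X, ← hω.neg_eq X Y]
  field_simp
  ring

theorem IsSymplecticCurvature.eq_ricciTypeCurv_iff [NeZero (2 : K)] (hR : IsSymplecticCurvature R)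
    (hω : ω.IsAlt) (hω' : ω.Nondegenerate) (hB : B.IsSymm) :
    R = ricciTypeCurv ω B ↔ ∀ X Y, ω X Y ≠ 0 → ∀ Z ∈ Submodule.span K {X, Y},
      R X Y Z Z = 2 * (ω X Y * B Z Z) := by
  refine ⟨fun h X Y _ Z hZ => h ▸ ricciTypeCurv_self_of_mem_span hω hB hZ, fun h => ?_⟩
  refine sub_eq_zero.1 ((hR.sub (isSymplecticCurvature_ricciTypeCurv hω hB)).eq_zero fun X Y => ?_)
  have hX : X ∈ Submodule.span K {X, Y} := Submodule.subset_span (Set.mem_insert X {Y})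
  rw [LinearMap.sub_apply, LinearMap.sub_apply, LinearMap.sub_apply, LinearMap.sub_apply,
    ricciTypeCurv_self_of_mem_span hω hB hX, sub_eq_zero]
  obtain rfl | hX₀ := eq_or_ne X 0
  · simp
  have hωX : ω X ≠ 0 := fun h₀ => hX₀ (hω'.1 X fun y => by simp [h₀])
  have hlin : ((R X).flip X).flip X = (2 * B X X) • ω X :=
    linearMap_ext_of_eqOn_ne_zero hωX fun y hy => by
      simpa [mul_comm, mul_left_comm] using
        h X y hy X (Submodule.subset_span (Set.mem_insert X {y}))
  simpa [mul_comm, mul_left_comm] using LinearMap.congr_fun hlin Y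

theorem trace_of_ricciTypeCurv [NeZero (2 : K)] [FiniteDimensional K V] (hω : ω.IsAlt)
    (hω' : ω.Nondegenerate) (hB : B.IsSymm) {u v : V} {L : End K V}
    (hL : ∀ w z, ω (L w) z = ricciTypeCurv ω B w u v z) :
    LinearMap.trace K V L = ((finrank K V : K) / 2 + 1) * B u v := by
  let b : End K V := B.symmCompOfNondegenerate ω hω'
  have hb (p q : V) : ω (b p) q = B p q := BilinForm.symmCompOfNondegenerate_left_apply B hω' q p
  have hb' (p q : V) : ω p (b q) = -B q p := by rw [← hω.neg_eq, hb]
  have hLeq : L = (2 : K)⁻¹ • (B v u • LinearMap.id - (ω v).smulRight (b u))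
      - (2 : K)⁻¹ • (ω u v • b + (B v).smulRight u) - (ω u).smulRight (b v) := by
    refine LinearMap.ext fun w => sub_eq_zero.1 (hω'.1 _ fun z => ?_)
    simp only [map_sub, map_add, map_smul, LinearMap.sub_apply, LinearMap.add_apply,
      LinearMap.smul_apply, LinearMap.smulRight_apply, LinearMap.id_apply, smul_eq_mul, hL,
      ricciTypeCurv_apply, hb, hB.eq z, ← hω.neg_eq w]
    ring
  have hbtrace : LinearMap.trace K V b = 0 :=
    trace_eq_zero_of_isSkewAdjoint hω' fun p q => by simp [hb, hb', hB.eq p q]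
  have h2 : (2 : K) ≠ 0 := NeZero.ne 2
  simp only [hLeq, map_sub, map_add, map_smul, LinearMap.trace_smulRight, LinearMap.trace_id,
    hbtrace, hb', smul_eq_mul, hB.eq v u]
  field_simp
  ring

end RicciType

end SymplecticAlgebra

section Geometry

set_option maxSynthPendingDepth 3

theorem hasFDerivAt_clm_apply_apply {F G H : Type*} [NormedAddCommGroup F] [NormedSpace ℝ F]
    [NormedAddCommGroup G] [NormedSpace ℝ G] [NormedAddCommGroup H] [NormedSpace ℝ H]
    {B : E → F →L[ℝ] G →L[ℝ] H} {x : E} (hB : DifferentiableAt ℝ B x) (v : F) (w : G) :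
    HasFDerivAt (fun y => B y v w) (((fderiv ℝ B x).flip v).flip w) x := by
  refine ((hB.hasFDerivAt.clm_apply (hasFDerivAt_const v x)).clm_apply
    (hasFDerivAt_const w x)).congr_fderiv ?_
  ext
  simp

namespace SympForm

variable (Ω : SympForm E) (x : E)

theorem isAlt : (Ω.ω x).toBilinForm.IsAlt := fun u => by
  have h := Ω.skew x u u
  simp only [ContinuousLinearMap.toBilinForm_apply]
  linarith

theorem nondegenerate : (Ω.ω x).toBilinForm.Nondegenerate :=
  (LinearMap.IsRefl.nondegenerate_iff_separatingLeft (Ω.isAlt x).isRefl).2 (Ω.nondeg x)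

end SympForm

namespace SympConnection

variable {Ω : SympForm E} (C : SympConnection Ω) (x : E)

theorem differentiable : Differentiable ℝ C.Γ :=
  C.smooth.differentiable (by simp)

theorem fderiv_symm (a u v : E) : fderiv ℝ C.Γ x a u v = fderiv ℝ C.Γ x a v u := by
  have huv := hasFDerivAt_clm_apply_apply (C.differentiable x) u v
  simp only [C.symm _ u v] at huv
  exact DFunLike.congr_fun (huv.unique (hasFDerivAt_clm_apply_apply (C.differentiable x) v u)) a

theorem fderiv_fderiv_ω (a u v w : E) :
    fderiv ℝ (fderiv ℝ Ω.ω) x a u v w =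
      fderiv ℝ Ω.ω x a (C.Γ x u v) w + Ω.ω x (fderiv ℝ C.Γ x a u v) w
        + fderiv ℝ Ω.ω x a v (C.Γ x u w) + Ω.ω x v (fderiv ℝ C.Γ x a u w) := by
  have hd : DifferentiableAt ℝ (fderiv ℝ Ω.ω) x :=
    (Ω.smooth.fderiv_right (m := 1) (by norm_cast)).differentiable (by simp) x
  have hlhs := ((hd.hasFDerivAt.clm_apply (hasFDerivAt_const u x)).clm_apply
    (hasFDerivAt_const v x)).clm_apply (hasFDerivAt_const w x)
  have hω := (Ω.smooth.differentiable (by simp) x).hasFDerivAt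
  have hΓ (z : E) := hasFDerivAt_clm_apply_apply (C.differentiable x) u z
  have hrhs := ((hω.clm_apply (hΓ v)).clm_apply (hasFDerivAt_const w x)).add
    ((hω.clm_apply (hasFDerivAt_const v x)).clm_apply (hΓ w))
  simp only [C.parallel] at hlhs
  have h := DFunLike.congr_fun (hlhs.unique hrhs) a
  simp only [ContinuousLinearMap.comp_zero, zero_add, ContinuousLinearMap.flip_apply,
    ContinuousLinearMap.flip_add, _root_.add_apply, ContinuousLinearMap.comp_apply] at h
  linarith

theorem curvOp_apply (u v w : E) :
    curvOp C x u v w = fderiv ℝ C.Γ x u v w - fderiv ℝ C.Γ x v u w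
      + C.Γ x u (C.Γ x v w) - C.Γ x v (C.Γ x u w) := by
  simp [curvOp]

/-- The curvature `R_{ijk}{}^l` as a bilinear map `(u, v) ↦ R(u, v)` into endomorphisms. -/
noncomputable def curv : E →ₗ[ℝ] E →ₗ[ℝ] End ℝ E :=
  LinearMap.mk₂ ℝ (fun u v => (curvOp C x u v).toLinearMap)
    (fun _ _ _ => by
      ext
      simp only [ContinuousLinearMap.coe_coe, LinearMap.add_apply, curvOp_apply, map_add,
        _root_.add_apply]
      abel)
    (fun _ _ _ => by ext; simp [curvOp_apply, smul_sub, smul_add])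
    (fun _ _ _ => by
      ext
      simp only [ContinuousLinearMap.coe_coe, LinearMap.add_apply, curvOp_apply, map_add,
        _root_.add_apply]
      abel)
    (fun _ _ _ => by ext; simp [curvOp_apply, smul_sub, smul_add])

theorem curv_apply (u v w : E) : C.curv x u v w = curvOp C x u v w :=
  rfl

/-- The lowered curvature `R_{ijkl}` as a multilinear form. -/
noncomputable def loweredCurv : E →ₗ[ℝ] E →ₗ[ℝ] BilinForm ℝ E :=
  (C.curv x).compr₂ (LinearMap.compRight ℝ (Ω.ω x).toBilinForm)

theorem loweredCurv_apply (u v w z : E) : C.loweredCurv x u v w z = Rlow C x u v w z :=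
  rfl

theorem Rlow_symm (u v w z : E) : Rlow C x u v w z = Rlow C x u v z w := by
  have hsymm : fderiv ℝ (fderiv ℝ Ω.ω) x u v w z = fderiv ℝ (fderiv ℝ Ω.ω) x v u w z := by
    have h := Ω.smooth.contDiffAt.isSymmSndFDerivAt (x := x)
      (by rw [minSmoothness_of_isRCLikeNormedField]; norm_cast)
    rw [h u v]
  simp only [C.fderiv_fderiv_ω, C.parallel] at hsymm
  have hskew : Ω.ω x w (curvOp C x u v z) = -Rlow C x u v z w := Ω.skew x _ _
  rw [← neg_eq_iff_eq_neg.2 hskew]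
  simp only [Rlow, curvOp_apply, map_sub, map_add, _root_.sub_apply, _root_.add_apply]
  linarith

theorem isSymplecticCurvature_loweredCurv : IsSymplecticCurvature (C.loweredCurv x) where
  skew u v w z := by
    simp only [loweredCurv_apply, Rlow, curvOp_apply, map_sub, map_add, _root_.sub_apply,
      _root_.add_apply]
    ring
  symm := C.Rlow_symm x
  bianchi u v w z := by
    simp only [loweredCurv_apply, Rlow, curvOp_apply, map_sub, map_add, _root_.sub_apply,
      _root_.add_apply, C.fderiv_symm x u w v, C.fderiv_symm x v w u, C.fderiv_symm x w v u,
      C.symm x w u, C.symm x w v, C.symm x v u]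
    ring

/-- The Ricci tensor as a bilinear form. -/
noncomputable def ricciForm : BilinForm ℝ E :=
  (LinearMap.lflip.toLinearMap ∘ₗ (C.curv x).flip).compr₂ (LinearMap.trace ℝ E)

theorem ricciForm_eq_trace (u v : E) :
    C.ricciForm x u v = LinearMap.trace ℝ E (((C.curv x).flip u).flip v) :=
  rfl

theorem ricciForm_apply (u v : E) : C.ricciForm x u v = ricci C x u v :=
  rfl

/-- A differentiable covariant 2-tensor field `B` with `∇B = 0`. -/
def IsParallel (B : E → E →L[ℝ] E →L[ℝ] ℝ) : Prop :=
  Differentiable ℝ B ∧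
    ∀ x u v w, fderiv ℝ B x u v w = B x (C.Γ x u v) w + B x v (C.Γ x u w)

theorem isParallel_ω : C.IsParallel Ω.ω :=
  ⟨Ω.smooth.differentiable (by simp), C.parallel⟩

namespace IsParallel

variable {C} {B : E → E →L[ℝ] E →L[ℝ] ℝ}

theorem const_smul (hB : C.IsParallel B) (c : ℝ) : C.IsParallel (c • B) := by
  refine ⟨hB.1.const_smul c, fun x u v w => ?_⟩
  rw [fderiv_const_smul (hB.1 x)]
  simp [hB.2, mul_add]

theorem hasFDerivAt (hB : C.IsParallel B) (x v w : E) :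
    HasFDerivAt (fun y => B y v w)
      ((B x).flip w ∘L (C.Γ x).flip v + B x v ∘L (C.Γ x).flip w) x :=
  (hasFDerivAt_clm_apply_apply (hB.1 x) v w).congr_fderiv (by ext u; simp [hB.2])

end IsParallel

theorem isSymm_ricciForm [FiniteDimensional ℝ E] : (C.ricciForm x).IsSymm where
  eq u v := by
    have hskew : (Ω.ω x).toBilinForm.IsSkewAdjoint (C.curv x u v) := fun w z => by
      have h : Ω.ω x (C.curv x u v w) z = Ω.ω x (C.curv x u v z) w := C.Rlow_symm x u v w z
      simpa [Ω.skew x w] using h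
    have hbianchi : ((C.curv x).flip u).flip v - ((C.curv x).flip v).flip u = -C.curv x u v := by
      ext w
      simp only [LinearMap.sub_apply, LinearMap.flip_apply, LinearMap.neg_apply, curv_apply,
        curvOp_apply, C.fderiv_symm x w v u, C.fderiv_symm x u v w, C.fderiv_symm x v w u,
        C.symm x w u, C.symm x w v, C.symm x v u]
      abel
    have htrace := congrArg (LinearMap.trace ℝ E) hbianchi
    rw [map_sub, map_neg, trace_eq_zero_of_isSkewAdjoint (Ω.nondegenerate x) hskew, neg_zero,
      sub_eq_zero] at htrace
    exact htrace

/-- The Ricci tensor as a field of continuous bilinear forms, the form in which it can be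
differentiated. -/
noncomputable def ricciCLM [FiniteDimensional ℝ E] (x : E) : E →L[ℝ] E →L[ℝ] ℝ :=
  (C.ricciForm x).toContinuousBilinearMap

theorem ricciCLM_apply [FiniteDimensional ℝ E] (u v : E) :
    C.ricciCLM x u v = ricci C x u v :=
  C.ricciForm_apply x u v

theorem differentiable_ricciCLM [FiniteDimensional ℝ E] : Differentiable ℝ C.ricciCLM := by
  have hΓ : ContDiff ℝ 1 C.Γ := C.smooth.of_le (by norm_cast)
  have hdΓ : ContDiff ℝ 1 (fderiv ℝ C.Γ) := C.smooth.fderiv_right (by norm_cast)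
  suffices ContDiff ℝ 1 C.ricciCLM from this.differentiable one_ne_zero
  refine contDiff_clm_apply_iff.2 fun u => contDiff_clm_apply_iff.2 fun v => ?_
  simp only [ricciCLM_apply]
  have hcurv : ContDiff ℝ 1 fun x => ((fderiv ℝ C.Γ x).flip u).flip v
      - (fderiv ℝ C.Γ x u).flip v + (C.Γ x).flip (C.Γ x u v) - C.Γ x u ∘L (C.Γ x).flip v := by
    refine contDiff_clm_apply_iff.2 fun w => ?_
    simp only [_root_.sub_apply, _root_.add_apply, ContinuousLinearMap.flip_apply,
      ContinuousLinearMap.comp_apply]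
    fun_prop
  exact (LinearMap.trace ℝ E ∘ₗ ContinuousLinearMap.coeLM ℝ).toContinuousLinearMap.contDiff.comp
    hcurv

theorem parallelRicci_iff [FiniteDimensional ℝ E] :
    ParallelRicci C ↔ C.IsParallel C.ricciCLM := by
  have hd (x w u v : E) : fderiv ℝ (fun y => ricci C y u v) x w = fderiv ℝ C.ricciCLM x w u v := by
    have h := (hasFDerivAt_clm_apply_apply (C.differentiable_ricciCLM x) u v).fderiv
    simp only [ricciCLM_apply] at h
    simp [h]
  simp only [ParallelRicci, covDerivRic, IsParallel, C.differentiable_ricciCLM, true_and, hd,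
    ricciCLM_apply, sub_sub, sub_eq_zero]

theorem weylFlat_iff (n : ℕ) :
    WeylFlat n C ↔ ∀ x, C.loweredCurv x =
      ricciTypeCurv (Ω.ω x).toBilinForm (((n : ℝ) + 1)⁻¹ • C.ricciForm x) := by
  refine forall_congr' fun x => ?_
  simp only [LinearMap.ext_iff, loweredCurv_apply, weyl, sub_eq_zero]
  refine forall₄_congr fun u v w z => Eq.congr_right ?_
  simp only [ricciTypeCurv_apply, ContinuousLinearMap.toBilinForm_apply, LinearMap.smul_apply,
    ricciForm_apply, smul_eq_mul]
  ring

theorem hasConstScurv_iff :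
    HasConstScurv C ↔ ∃ B, C.IsParallel B ∧ ∀ x, (B x).toBilinForm.IsSymm ∧
      C.loweredCurv x = ricciTypeCurv (Ω.ω x).toBilinForm (B x).toBilinForm := by
  have hiff (x : E) {B : BilinForm ℝ E} (hB : B.IsSymm) :=
    (C.isSymplecticCurvature_loweredCurv x).eq_ricciTypeCurv_iff (Ω.isAlt x) (Ω.nondegenerate x) hB
  constructor
  · rintro ⟨A, ⟨hAsymm, hA⟩, hscurv⟩
    refine ⟨(2⁻¹ : ℝ) • A, IsParallel.const_smul hA 2⁻¹, fun x => ?_⟩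
    have hsymm : (((2⁻¹ : ℝ) • A) x).toBilinForm.IsSymm :=
      ⟨fun u v => congrArg (2⁻¹ * ·) (hAsymm x u v)⟩
    refine ⟨hsymm, (hiff x hsymm).2 fun X Y hXY Z hZ => ?_⟩
    have h : Rlow C x X Y Z Z = A x Z Z * Ω.ω x X Y := (div_eq_iff hXY).1 (hscurv x X Y hXY Z hZ)
    simp only [loweredCurv_apply, h, ContinuousLinearMap.toBilinForm_apply, Pi.smul_apply,
      _root_.smul_apply, smul_eq_mul]
    ring
  · rintro ⟨B, hB, h⟩
    refine ⟨(2 : ℝ) • B, ⟨fun x u v => congrArg (2 * ·) ((h x).1.eq u v), hB.const_smul 2⟩,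
      fun x X Y hXY Z hZ => (div_eq_iff hXY).2 ?_⟩
    have hRlow : Rlow C x X Y Z Z = 2 * (Ω.ω x X Y * B x Z Z) :=
      (hiff x (h x).1).1 (h x).2 X Y hXY Z hZ
    simp only [hRlow, Pi.smul_apply, _root_.smul_apply, smul_eq_mul]
    ring

theorem ricciForm_of_loweredCurv_eq [FiniteDimensional ℝ E] {B : BilinForm ℝ E} (hB : B.IsSymm)
    (h : C.loweredCurv x = ricciTypeCurv (Ω.ω x).toBilinForm B) :
    C.ricciForm x = ((finrank ℝ E : ℝ) / 2 + 1) • B := by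
  ext u v
  rw [ricciForm_eq_trace, LinearMap.smul_apply, LinearMap.smul_apply, smul_eq_mul]
  exact trace_of_ricciTypeCurv (Ω.isAlt x) (Ω.nondegenerate x) hB fun w z => by rw [← h]; rfl

theorem locallySymmetric_of_loweredCurv_eq {B : E → E →L[ℝ] E →L[ℝ] ℝ} (hB : C.IsParallel B)
    (h : ∀ x, C.loweredCurv x = ricciTypeCurv (Ω.ω x).toBilinForm (B x).toBilinForm) :
    LocallySymmetric C := by
  intro x a u v w z
  have hR (y p q r s : E) : Rlow C y p q r s =
      2⁻¹ * (Ω.ω y p r * B y s q + Ω.ω y p s * B y r q)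
        - 2⁻¹ * (Ω.ω y q r * B y s p + Ω.ω y q s * B y r p) + Ω.ω y p q * B y r s := by
    rw [← loweredCurv_apply, h, ricciTypeCurv_apply]
    rfl
  have hprod (p q r s : E) :=
    (C.isParallel_ω.hasFDerivAt x p q).mul (hB.hasFDerivAt x r s)
  have hderiv := ((((hprod u w z v).add (hprod u z w v)).const_mul 2⁻¹).sub
    (((hprod v w z u).add (hprod v z w u)).const_mul 2⁻¹)).add (hprod u v w z)
  have hfd := hderiv.congr_of_eventuallyEq
    (Filter.Eventually.of_forall fun y => hR y u v w z)
  rw [covDerivR, hfd.fderiv]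
  simp only [hR, _root_.sub_apply, _root_.add_apply, _root_.smul_apply, smul_eq_mul,
    ContinuousLinearMap.comp_apply, ContinuousLinearMap.flip_apply]
  ring

end SympConnection

end Geometry

/-- A symplectic connection has constant symplectic sectional curvature if and
only if it is Weyl flat with parallel Ricci tensor, in which case it is locally symmetric. -/
theorem statement_6 {E : Type*} [NormedAddCommGroup E] [NormedSpace ℝ E]
    [FiniteDimensional ℝ E]
    (n : ℕ) (hn : 1 ≤ n) (hdim : Module.finrank ℝ E = 2 * n)
    (Ω : SympForm E) (C : SympConnection Ω) :
    (HasConstScurv C ↔ (WeylFlat n C ∧ ParallelRicci C))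
    ∧ (HasConstScurv C → LocallySymmetric C) := by
  have hn₀ : (n : ℝ) + 1 ≠ 0 := by positivity
  have hric {B : E → E →L[ℝ] E →L[ℝ] ℝ} (hB : ∀ x, (B x).toBilinForm.IsSymm ∧
      C.loweredCurv x = ricciTypeCurv (Ω.ω x).toBilinForm (B x).toBilinForm) (x : E) :
      C.ricciForm x = ((n : ℝ) + 1) • (B x).toBilinForm := by
    rw [C.ricciForm_of_loweredCurv_eq x (hB x).1 (hB x).2, hdim]
    norm_num
  rw [C.hasConstScurv_iff, C.weylFlat_iff, C.parallelRicci_iff]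
  refine ⟨⟨?_, ?_⟩, ?_⟩
  · rintro ⟨B, hBpar, hB⟩
    have hricB : C.ricciCLM = ((n : ℝ) + 1) • B := by
      ext x u v
      exact LinearMap.congr_fun₂ (hric hB x) u v
    refine ⟨fun x => ?_, hricB ▸ hBpar.const_smul _⟩
    rw [hric hB x, inv_smul_smul₀ hn₀, (hB x).2]
  · rintro ⟨hweyl, hpar⟩
    exact ⟨((n : ℝ) + 1)⁻¹ • C.ricciCLM, hpar.const_smul _, fun x =>
      ⟨⟨fun u v => congrArg (((n : ℝ) + 1)⁻¹ * ·) ((C.isSymm_ricciForm x).eq u v)⟩, hweyl x⟩⟩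
  · rintro ⟨B, hBpar, hB⟩
    exact C.locallySymmetric_of_loweredCurv_eq hBpar fun x => (hB x).2
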